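/- Let G be a finite group, k a commutative Noetherian ring, and M a finitely generated kG-module. If the projective dimension of M over kG is finite, then pd_{kG}(M) = pd_k(M). -/

import Mathlib

open CategoryTheory CategoryTheory.Limits

/-- `pdLE n M` : `M` has projective dimension `≤ n`. -/
noncomputable def pdLE {C : Type*} [Category C] [Abelian C] : ℕ → C → Prop
  | 0, M => Projective M
  | n + 1, M => ∃ (P : C) (f : P ⟶ M), Projective P ∧ Epi f ∧ pdLE n (kernel f)

section Unbundled

set_option linter.unusedSectionVars false

variable {k : Type} [CommRing k] {G : Type} [Group G] [Fintype G]
  {K : Type} [AddCommGroup K] [Module k K] [Module (MonoidAlgebra k G) K]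
  [IsScalarTower k (MonoidAlgebra k G) K]

variable (k G K) in
/-- Sum of (identity coefficient) times (basis element). -/
noncomputable def coeffOneMap : (K →₀ MonoidAlgebra k G) →ₗ[k] K :=
  Finsupp.lsum k fun y : K =>
    LinearMap.toSpanSingleton k K y ∘ₗ (Finsupp.lapply (1 : G) : (G →₀ k) →ₗ[k] k) ∘ₗ
      (MonoidAlgebra.coeffLinearEquiv k).toLinearMap

theorem coeffOneMap_single (y : K) (a : MonoidAlgebra k G) :
    coeffOneMap k G K (Finsupp.single y a) = a.coeff 1 • y := by
  simp [coeffOneMap]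

theorem higman_free (u : K →₀ MonoidAlgebra k G) :
    ∑ g : G, MonoidAlgebra.single g⁻¹ (1 : k) •
      coeffOneMap k G K (MonoidAlgebra.single g (1 : k) • u) =
      Finsupp.linearCombination (MonoidAlgebra k G) id u := by
  classical
  induction u using Finsupp.induction_linear with
  | zero => simp
  | add u v hu hv => simp only [smul_add, map_add, Finset.sum_add_distrib, hu, hv]
  | single y a =>
    simp only [Finsupp.smul_single, coeffOneMap_single, Finsupp.linearCombination_single, id]
    induction a using MonoidAlgebra.induction_linear with
    | zero => simp
    | add a b ha hb =>
      simp only [smul_add, add_smul, MonoidAlgebra.coeff_add, Finsupp.add_apply,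
        Finset.sum_add_distrib, ha, hb]
    | single h r =>
      rw [Finset.sum_eq_single h⁻¹]
      · simp only [inv_inv, smul_eq_mul, MonoidAlgebra.single_mul_single, one_mul]
        simp only [inv_mul_cancel, MonoidAlgebra.coeff_single, Finsupp.single_eq_same]
        rw [← algebraMap_smul (MonoidAlgebra k G) r y, smul_smul]
        simp
      · intro g _ hg
        have : g * h ≠ 1 := fun e => hg (eq_inv_of_mul_eq_one_left e)
        simp [MonoidAlgebra.single_mul_single, this]
      · simp

theorem exists_equivariant_retraction [Module.Projective (MonoidAlgebra k G) K]
    {P : Type} [AddCommGroup P] [Module k P] [Module (MonoidAlgebra k G) P]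
    [IsScalarTower k (MonoidAlgebra k G) P] (i : K →ₗ[MonoidAlgebra k G] P)
    (s : P →ₗ[k] K) (hs : ∀ x, s (i x) = x) :
    ∃ t : P →ₗ[MonoidAlgebra k G] K, ∀ x, t (i x) = x := by
  obtain ⟨σ, hσ⟩ := (Module.projective_def' (R := MonoidAlgebra k G) (P := K)).1 inferInstance
  refine ⟨LinearMap.sumOfConjugatesEquivariant G
    (coeffOneMap k G K ∘ₗ σ.restrictScalars k ∘ₗ s), fun x => ?_⟩
  rw [LinearMap.sumOfConjugatesEquivariant_apply]
  simp only [LinearMap.conjugate_apply, LinearMap.comp_apply, LinearMap.restrictScalars_apply,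
    ← map_smul i, hs, map_smul σ]
  rw [higman_free]
  exact LinearMap.congr_fun hσ x

theorem projective_restrict [Module.Projective (MonoidAlgebra k G) K] :
    Module.Projective k K := by
  obtain ⟨σ, hσ⟩ := (Module.projective_def' (R := MonoidAlgebra k G) (P := K)).1 inferInstance
  refine Module.Projective.of_split (M := K →₀ MonoidAlgebra k G) (σ.restrictScalars k)
    ((Finsupp.linearCombination (MonoidAlgebra k G) id).restrictScalars k) ?_
  ext x
  exact LinearMap.congr_fun hσ x

end Unbundled

theorem kernel_ses {C : Type*} [Category C] [Abelian C] {P X : C} (f : P ⟶ X) [Epi f] :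
    (ShortComplex.mk (kernel.ι f) f (kernel.condition f)).ShortExact :=
  { exact := ShortComplex.exact_kernel f }

theorem pdLE_iff {C : Type*} [Category C] [Abelian C] [EnoughProjectives C] (n : ℕ) (X : C) :
    pdLE n X ↔ HasProjectiveDimensionLT X (n + 1) := by
  induction n generalizing X with
  | zero => exact projective_iff_hasProjectiveDimensionLT_one
  | succ n ih =>
    constructor
    · rintro ⟨P, f, hP, hf, hk⟩
      rw [ih] at hk
      exact ((kernel_ses f).hasProjectiveDimensionLT_X₃_iff n hP).2 hk
    · intro h
      refine ⟨Projective.over X, Projective.π X, inferInstance, inferInstance, ?_⟩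
      rw [ih]
      exact ((kernel_ses (Projective.π X)).hasProjectiveDimensionLT_X₃_iff n
        (inferInstanceAs (Projective (Projective.over X)))).1 h

section Bundled

set_option linter.unusedSectionVars false

variable {k : Type} [CommRing k] {G : Type} [Group G] [Fintype G]

variable (k G) in
/-- Restriction of scalars from the group algebra. -/
noncomputable abbrev resF : ModuleCat.{0} (MonoidAlgebra k G) ⥤ ModuleCat.{0} k :=
  ModuleCat.restrictScalars (algebraMap k (MonoidAlgebra k G))

theorem resF_tower (X : ModuleCat.{0} (MonoidAlgebra k G)) :
    letI : Module k X := Module.compHom X (algebraMap k (MonoidAlgebra k G))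
    IsScalarTower k (MonoidAlgebra k G) X :=
  letI : Module k X := Module.compHom X (algebraMap k (MonoidAlgebra k G))
  .of_algebraMap_smul fun _ _ => rfl

theorem resF_projective (X : ModuleCat.{0} (MonoidAlgebra k G)) [Projective X] :
    Projective ((resF k G).obj X) := by
  let : Module k X := Module.compHom X (algebraMap k (MonoidAlgebra k G))
  have := resF_tower (k := k) (G := G) X
  have : Module.Projective (MonoidAlgebra k G) X := inferInstance
  have : Module.Projective k X := projective_restrict (G := G)
  have : Module.Projective k ((resF k G).obj X) := this
  infer_instance

theorem resF_ses {S : ShortComplex (ModuleCat.{0} (MonoidAlgebra k G))} (hS : S.ShortExact) :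
    (S.map (resF k G)).ShortExact :=
  { exact := by
      have h := hS.exact
      rw [ShortComplex.moduleCat_exact_iff] at h ⊢
      exact h
    mono_f := by
      have := hS.mono_f
      exact inferInstanceAs (Mono ((resF k G).map S.f))
    epi_g := by
      have := hS.epi_g
      exact inferInstanceAs (Epi ((resF k G).map S.g)) }

theorem resF_pd (n : ℕ) (X : ModuleCat.{0} (MonoidAlgebra k G))
    (h : HasProjectiveDimensionLT X (n + 1)) :
    HasProjectiveDimensionLT ((resF k G).obj X) (n + 1) := by
  induction n generalizing X with
  | zero =>
    have : Projective X := (projective_iff_hasProjectiveDimensionLT_one).2 h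
    exact (projective_iff_hasProjectiveDimensionLT_one).1 (resF_projective X)
  | succ n ih =>
    have hS := kernel_ses (Projective.π X)
    have h1 := (hS.hasProjectiveDimensionLT_X₃_iff n
      (inferInstanceAs (Projective (Projective.over X)))).1 h
    exact ((resF_ses hS).hasProjectiveDimensionLT_X₃_iff n
      (resF_projective (Projective.over X))).2 (ih _ h1)

theorem projective_of_ses {S : ShortComplex (ModuleCat.{0} (MonoidAlgebra k G))}
    (hS : S.ShortExact) (h1 : Projective S.X₁) (h2 : Projective S.X₂)
    (h3 : Projective ((resF k G).obj S.X₃)) : Projective S.X₃ := by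
  have : Projective (S.map (resF k G)).X₃ := h3
  let sp := (resF_ses hS).splittingOfProjective
  let : Module k S.X₁ := Module.compHom S.X₁ (algebraMap k (MonoidAlgebra k G))
  let : Module k S.X₂ := Module.compHom S.X₂ (algebraMap k (MonoidAlgebra k G))
  have := resF_tower (k := k) (G := G) S.X₁
  have := resF_tower (k := k) (G := G) S.X₂
  obtain ⟨t, ht⟩ := exists_equivariant_retraction (k := k) S.f.hom
    (show S.X₂ →ₗ[k] S.X₁ from sp.r.hom) (fun x => by
      have := congrArg (fun f => f.hom x) sp.f_r
      exact this)
  let sp' := ShortComplex.Splitting.ofExactOfRetraction S hS.exact (ModuleCat.ofHom t)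
    (by ext x; exact ht x) hS.epi_g
  exact (Retract.mk sp'.s S.g sp'.s_g).projective

theorem projective_of_pd (m : ℕ) (X : ModuleCat.{0} (MonoidAlgebra k G))
    (h : HasProjectiveDimensionLT X (m + 1)) (hk : Projective ((resF k G).obj X)) :
    Projective X := by
  induction m generalizing X with
  | zero => exact (projective_iff_hasProjectiveDimensionLT_one).2 h
  | succ m ih =>
    have hS := kernel_ses (Projective.π X)
    have h1 := (hS.hasProjectiveDimensionLT_X₃_iff m
      (inferInstanceAs (Projective (Projective.over X)))).1 h
    refine projective_of_ses hS (ih _ h1 ?_) (inferInstanceAs (Projective (Projective.over X))) hk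
    have hS' := resF_ses (k := k) hS
    rw [projective_iff_hasProjectiveDimensionLT_one] at hk ⊢
    have hP := (projective_iff_hasProjectiveDimensionLT_one).1
      (resF_projective (k := k) (Projective.over X))
    exact hS'.hasProjectiveDimensionLT_X₁ 1 hP
      (hasProjectiveDimensionLT_of_ge ((resF k G).obj X) 1 2 (by norm_num))

theorem pd_of_pd (n m : ℕ) (X : ModuleCat.{0} (MonoidAlgebra k G))
    (h : HasProjectiveDimensionLT X (m + 1))
    (hk : HasProjectiveDimensionLT ((resF k G).obj X) (n + 1)) :
    HasProjectiveDimensionLT X (n + 1) := by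
  induction n generalizing X with
  | zero =>
    rw [zero_add, ← projective_iff_hasProjectiveDimensionLT_one] at hk ⊢
    exact projective_of_pd m X h hk
  | succ n ih =>
    have hS := kernel_ses (Projective.π X)
    have hP : Projective (Projective.over X) := inferInstance
    refine (hS.hasProjectiveDimensionLT_X₃_iff n hP).2 (ih _ ?_ ?_)
    · exact (hS.hasProjectiveDimensionLT_X₃_iff m hP).1
        (hasProjectiveDimensionLT_of_ge X (m + 1) (m + 2) (by lia))
    · exact ((resF_ses hS).hasProjectiveDimensionLT_X₃_iff n
        (resF_projective (Projective.over X))).1 hk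

end Bundled

/-- For a finite group `G` and a finitely generated `kG`-module `M` of finite projective
dimension over `kG`, the projective dimensions of `M` over `kG` and over `k` agree. -/
theorem stmt_18 (k : Type) [CommRing k] [IsNoetherianRing k] (G : Type) [Group G]
    [Fintype G] (M : Type) [AddCommGroup M] [Module (MonoidAlgebra k G) M] [Module k M]
    [IsScalarTower k (MonoidAlgebra k G) M] [Module.Finite (MonoidAlgebra k G) M]
    (hfin : ∃ n, pdLE n (ModuleCat.of (MonoidAlgebra k G) M)) :
    ∀ n : ℕ, pdLE n (ModuleCat.of (MonoidAlgebra k G) M) ↔ pdLE n (ModuleCat.of k M) := by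
  intro n
  obtain ⟨m, hm⟩ := hfin
  rw [pdLE_iff] at hm
  rw [pdLE_iff, pdLE_iff]
  let e' : (resF k G).obj (ModuleCat.of (MonoidAlgebra k G) M) ≃ₗ[k] ModuleCat.of k M :=
    { AddEquiv.refl M with
      map_smul' := fun c x => algebraMap_smul (MonoidAlgebra k G) c (show M from x) }
  let e : (resF k G).obj (ModuleCat.of (MonoidAlgebra k G) M) ≅ ModuleCat.of k M :=
    e'.toModuleIso
  constructor
  · intro h
    have := resF_pd n _ h
    exact hasProjectiveDimensionLT_of_iso e _
  · intro h
    exact pd_of_pd n m _ hm (hasProjectiveDimensionLT_of_iso e.symm _)
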